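/- Suppose g is monotone in the sense ⟨g(y₁) − g(y₂), y₁ − y₂⟩ ≤ 0 for all y₁, y₂ ∈ Ω, and L-Lipschitz: ‖g(y₁) − g(y₂)‖ ≤ L‖y₁ − y₂‖ for all y₁, y₂ ∈ Ω. Let y* ∈ Ω solve the variational inequality ⟨g(y*), y − y*⟩ ≤ 0 for all y ∈ Ω, let 0 < t < (√2·L)⁻¹, and let the extra pseudo-gradient sequence be defined by ŷ_s = P_Ω(y_s + t·g(y_s)), y_{s+1} = P_Ω(y_s + t·g(ŷ_s)) from any y₀ ∈ Ω. Then the distances are non-increasing: ‖y_{s+1} − y*‖ ≤ ‖y_s − y*‖ for all s ≥ 0. -/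

import Mathlib

open Matrix Filter
open scoped BigOperators

noncomputable section

/-- Vectors in ℝ^k. -/
abbrev Vec (k : ℕ) := Fin k → ℝ

/-- Standard Euclidean inner product on ℝ^k. -/
def ip {k : ℕ} (u v : Vec k) : ℝ := ∑ i, u i * v i

/-- Standard Euclidean norm on ℝ^k. -/
def nrm {k : ℕ} (u : Vec k) : ℝ := Real.sqrt (ip u u)

/-- The space ℝⁿ × ℝⁿ × ℝᵐ of triples y = (x, λ, v). -/
abbrev Triple (n m : ℕ) := Vec n × Vec n × Vec m

/-- Euclidean inner product on the triple space. -/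
def ipT {n m : ℕ} (y z : Triple n m) : ℝ :=
  ip y.1 z.1 + ip y.2.1 z.2.1 + ip y.2.2 z.2.2

/-- Euclidean norm on the triple space. -/
def nrmT {n m : ℕ} (y : Triple n m) : ℝ := Real.sqrt (ipT y y)

/-- Ω = ℝ₊ⁿ × ℝ₊ⁿ × ℝ₊ᵐ. -/
def Om (n m : ℕ) : Set (Triple n m) :=
  {y | (∀ j, 0 ≤ y.1 j) ∧ (∀ j, 0 ≤ y.2.1 j) ∧ (∀ i, 0 ≤ y.2.2 i)}

/-- The operator g(x, λ, v) = ((I − A)ᵀλ − p(x) − Bᵀv, c(λ) − (I − A)x, Bx − r(v)). -/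
def gOp {n m : ℕ} (A : Matrix (Fin n) (Fin n) ℝ) (B : Matrix (Fin m) (Fin n) ℝ)
    (p c : Vec n → Vec n) (r : Vec m → Vec m) (y : Triple n m) : Triple n m :=
  ((1 - A)ᵀ *ᵥ y.2.1 - p y.1 - Bᵀ *ᵥ y.2.2,
   c y.2.1 - (1 - A) *ᵥ y.1,
   B *ᵥ y.1 - r y.2.2)

/-- P_Ω : componentwise positive part (Euclidean projection onto Ω). -/
def projOm {n m : ℕ} (y : Triple n m) : Triple n m :=
  (fun j => max (y.1 j) 0, fun j => max (y.2.1 j) 0, fun i => max (y.2.2 i) 0)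

/-
Write `‖·‖` for the seminorm of the form `b`, and let `x̂ = P (x + v)`, `y = P (x + w)` with
`v = t • g x`, `w = t • g x̂`. The variational inequality of the projection at `y` tested at the
solution `z`, added to the one at `x̂` tested at `y`, gives after Young's inequality
`‖y - z‖² + ‖x - x̂‖² ≤ ‖x - z‖² + ‖v - w‖² + 2 b(w, x̂ - z)`.
The last term is nonpositive by Minty's form of the variational inequality, and the Lipschitz bound
with `t * L ≤ 1` gives `‖v - w‖ ≤ ‖x - x̂‖`.
-/

section BilinForm

variable {V : Type*} [AddCommGroup V] [Module ℝ V] {b : LinearMap.BilinForm ℝ V}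

/-- The seminorm `x ↦ √(b x x)` of a positive semidefinite form `b`. Lengths are measured by a form
rather than by a norm instance because `Triple n m` already carries the supremum norm. -/
def formNorm (b : LinearMap.BilinForm ℝ V) (x : V) : ℝ := √(b x x)

/-- `P` is a nearest-point projection onto `C` for the geometry of `b`, expressed by the obtuse
angle criterion; for convex `C` this is equivalent to `P x` minimizing the distance to `x`. -/
structure IsProjectionOnto (b : LinearMap.BilinForm ℝ V) (C : Set V) (P : V → V) : Prop where
  mem (x : V) : P x ∈ C
  apply_sub_sub_nonpos (x : V) {q : V} (hq : q ∈ C) : b (x - P x) (q - P x) ≤ 0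

lemma two_mul_apply_le_apply_self_add_apply_self (hb : b.IsPosSemidef) (u v : V) :
    2 * b u v ≤ b u u + b v v := by
  have hsq : 0 ≤ b (u - v) (u - v) := hb.isNonneg.nonneg _
  have hsymm : b v u = b u v := hb.isSymm.eq v u
  simp only [map_sub, LinearMap.sub_apply] at hsq
  linarith

lemma apply_smul_self_le_of_formNorm_le (hb : b.IsNonneg) {t L : ℝ} (ht : 0 ≤ t)
    (htL : t * L ≤ 1) {u x : V} (hux : formNorm b u ≤ L * formNorm b x) :
    b (t • u) (t • u) ≤ b x x := by
  have hle : t * formNorm b u ≤ formNorm b x :=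
    calc t * formNorm b u ≤ t * (L * formNorm b x) := mul_le_mul_of_nonneg_left hux ht
      _ = t * L * formNorm b x := (mul_assoc _ _ _).symm
      _ ≤ formNorm b x := mul_le_of_le_one_left (Real.sqrt_nonneg _) htL
  calc b (t • u) (t • u) = (t * formNorm b u) ^ 2 := by
        rw [formNorm, mul_pow, Real.sq_sqrt (hb.nonneg u)]
        simp only [map_smul, LinearMap.smul_apply, smul_eq_mul]
        ring
    _ ≤ formNorm b x ^ 2 := pow_le_pow_left₀ (mul_nonneg ht (Real.sqrt_nonneg _)) hle 2
    _ = b x x := Real.sq_sqrt (hb.nonneg x)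

lemma minty_of_monotone_of_stampacchia {C : Set V} {g : V → V} {z : V}
    (hmono : ∀ x ∈ C, ∀ y ∈ C, b (g x - g y) (x - y) ≤ 0) (hz : z ∈ C)
    (hsol : ∀ x ∈ C, b (g z) (x - z) ≤ 0) : ∀ x ∈ C, b (g x) (x - z) ≤ 0 := by
  intro x hx
  have hxz := hmono x hx z hz
  rw [map_sub b, LinearMap.sub_apply] at hxz
  linarith [hsol x hx]

namespace IsProjectionOnto

variable {C : Set V} {P : V → V}

lemma three_point (hP : IsProjectionOnto b C P) (hb : b.IsSymm) (x v : V) {z : V} (hz : z ∈ C) :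
    b (P (x + v) - z) (P (x + v) - z) + b (x - P (x + v)) (x - P (x + v)) ≤
      b (x - z) (x - z) + 2 * b v (P (x + v) - z) := by
  have hproj := hP.apply_sub_sub_nonpos (x + v) hz
  have hxz := hb.eq x z
  have hxP := hb.eq x (P (x + v))
  have hzP := hb.eq z (P (x + v))
  simp only [map_sub, map_add, LinearMap.sub_apply, LinearMap.add_apply] at hproj ⊢
  linarith

lemma extragradient_estimate (hP : IsProjectionOnto b C P) (hb : b.IsPosSemidef) (x v w : V)
    {z : V} (hz : z ∈ C) :
    b (P (x + w) - z) (P (x + w) - z) + b (x - P (x + v)) (x - P (x + v)) ≤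
      b (x - z) (x - z) + b (v - w) (v - w) + 2 * b w (P (x + v) - z) := by
  have hcorrector := hP.three_point hb.isSymm x w hz
  have hpredictor := hP.three_point hb.isSymm x v (hP.mem (x + w))
  have hyoung := two_mul_apply_le_apply_self_add_apply_self hb (v - w) (P (x + v) - P (x + w))
  have hcross : b v (P (x + v) - P (x + w)) + b w (P (x + w) - z) =
      b (v - w) (P (x + v) - P (x + w)) + b w (P (x + v) - z) := by
    simp only [map_sub, LinearMap.sub_apply]
    ring
  linarith

lemma extragradient_step (hP : IsProjectionOnto b C P) (hb : b.IsPosSemidef) {g : V → V}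
    {t L : ℝ} (ht : 0 ≤ t) (htL : t * L ≤ 1)
    (hlip : ∀ x ∈ C, ∀ y ∈ C, formNorm b (g x - g y) ≤ L * formNorm b (x - y))
    {z : V} (hz : z ∈ C) (hminty : ∀ x ∈ C, b (g x) (x - z) ≤ 0) {x : V} (hx : x ∈ C) :
    formNorm b (P (x + t • g (P (x + t • g x))) - z) ≤ formNorm b (x - z) := by
  set xh := P (x + t • g x) with hxh
  have hxhC : xh ∈ C := hP.mem _
  have hest := hP.extragradient_estimate hb x (t • g x) (t • g xh) hz
  rw [← hxh, ← smul_sub] at hest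
  have hstep : b (t • (g x - g xh)) (t • (g x - g xh)) ≤ b (x - xh) (x - xh) :=
    apply_smul_self_le_of_formNorm_le hb.isNonneg ht htL (hlip x hx xh hxhC)
  have hdescent : b (t • g xh) (xh - z) ≤ 0 := by
    rw [map_smul b, LinearMap.smul_apply]
    exact smul_nonpos_of_nonneg_of_nonpos ht (hminty xh hxhC)
  exact Real.sqrt_le_sqrt (by linarith)

end IsProjectionOnto

theorem stmt14_general (hb : b.IsPosSemidef) {C : Set V} {P : V → V}
    (hP : IsProjectionOnto b C P) {g : V → V} {L : ℝ}
    (hlip : ∀ x ∈ C, ∀ y ∈ C, formNorm b (g x - g y) ≤ L * formNorm b (x - y))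
    {z : V} (hz : z ∈ C) (hminty : ∀ x ∈ C, b (g x) (x - z) ≤ 0)
    {t : ℝ} (ht : 0 ≤ t) (htL : t * L ≤ 1) {x xh : ℕ → V} (hx0 : x 0 ∈ C)
    (hxh : ∀ s, xh s = P (x s + t • g (x s))) (hx : ∀ s, x (s + 1) = P (x s + t • g (xh s))) :
    ∀ s, formNorm b (x (s + 1) - z) ≤ formNorm b (x s - z) := by
  have hmem : ∀ s, x s ∈ C
    | 0 => hx0
    | s + 1 => hx s ▸ hP.mem _
  intro s
  rw [hx, hxh]
  exact hP.extragradient_step hb ht htL hlip hz hminty (hmem s)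

end BilinForm

lemma mul_le_one_of_lt_inv_sqrt_two_mul {t L : ℝ} (ht : 0 < t) (htL : t < (√2 * L)⁻¹) :
    t * L ≤ 1 := by
  have hpos : 0 < √2 * L := inv_pos.mp (ht.trans htL)
  have hL : 0 < L := pos_of_mul_pos_right hpos (Real.sqrt_nonneg 2)
  calc t * L ≤ t * (√2 * L) := by
        gcongr
        exact le_mul_of_one_le_left hL.le (Real.one_le_sqrt.mpr one_le_two)
    _ ≤ 1 := ((lt_div_iff₀ hpos).mp (by rwa [one_div])).le

section Orthant

lemma sub_posPart_mul_sub_posPart_nonpos {R : Type*} [Ring R] [LinearOrder R] [IsOrderedRing R]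
    (a : R) {q : R} (hq : 0 ≤ q) : (a - a⁺) * (q - a⁺) ≤ 0 := by
  rcases le_total a 0 with ha | ha
  · simpa [posPart_of_nonpos ha] using mul_nonpos_of_nonpos_of_nonneg ha hq
  · simp [posPart_of_nonneg ha]

lemma ip_sub_posPart_nonpos {k : ℕ} (a : Vec k) {q : Vec k} (hq : 0 ≤ q) :
    ip (a - a⁺) (q - a⁺) ≤ 0 :=
  Finset.sum_nonpos fun i _ => sub_posPart_mul_sub_posPart_nonpos (a i) (hq i)

variable (n m : ℕ)

/-- The Euclidean inner product `ipT` of the triple space as a bilinear form. -/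
def ipTForm : LinearMap.BilinForm ℝ (Triple n m) :=
  (dotProductBilin ℝ ℝ).compl₁₂ (.fst ℝ _ _) (.fst ℝ _ _) +
    (dotProductBilin ℝ ℝ).compl₁₂ (.fst ℝ _ _ ∘ₗ .snd ℝ _ _) (.fst ℝ _ _ ∘ₗ .snd ℝ _ _) +
    (dotProductBilin ℝ ℝ).compl₁₂ (.snd ℝ _ _ ∘ₗ .snd ℝ _ _) (.snd ℝ _ _ ∘ₗ .snd ℝ _ _)

lemma ip_self_nonneg {k : ℕ} (u : Vec k) : 0 ≤ ip u u :=
  Finset.sum_nonneg fun i _ => mul_self_nonneg (u i)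

lemma isPosSemidef_ipTForm : (ipTForm n m).IsPosSemidef where
  eq y z := by simp [ipTForm, dotProduct_comm]
  nonneg _ := add_nonneg (add_nonneg (ip_self_nonneg _) (ip_self_nonneg _)) (ip_self_nonneg _)

lemma isProjectionOnto_projOm : IsProjectionOnto (ipTForm n m) (Om n m) projOm where
  mem _ := ⟨fun _ => le_max_right _ _, fun _ => le_max_right _ _, fun _ => le_max_right _ _⟩
  apply_sub_sub_nonpos y _ hq :=
    add_nonpos (add_nonpos (ip_sub_posPart_nonpos y.1 hq.1) (ip_sub_posPart_nonpos y.2.1 hq.2.1))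
      (ip_sub_posPart_nonpos y.2.2 hq.2.2)

end Orthant

/-- for 0 < t < (√2·L)⁻¹ the distances of the extra pseudo-gradient
iterates to the VI solution y* are non-increasing. -/
theorem stmt14 {n m : ℕ} (hn : 0 < n) (hm : 0 < m)
    (A : Matrix (Fin n) (Fin n) ℝ) (B : Matrix (Fin m) (Fin n) ℝ)
    (p c : Vec n → Vec n) (r : Vec m → Vec m)
    (L : ℝ)
    (hmono : ∀ y₁ ∈ Om n m, ∀ y₂ ∈ Om n m,
      ipT (gOp A B p c r y₁ - gOp A B p c r y₂) (y₁ - y₂) ≤ 0)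
    (hlip : ∀ y₁ ∈ Om n m, ∀ y₂ ∈ Om n m,
      nrmT (gOp A B p c r y₁ - gOp A B p c r y₂) ≤ L * nrmT (y₁ - y₂))
    (ys : Triple n m) (hys : ys ∈ Om n m)
    (hVI : ∀ y ∈ Om n m, ipT (gOp A B p c r ys) (y - ys) ≤ 0)
    (t : ℝ) (ht0 : 0 < t) (ht1 : t < (Real.sqrt 2 * L)⁻¹)
    (y yh : ℕ → Triple n m) (hy0 : y 0 ∈ Om n m)
    (hyh : ∀ s : ℕ, yh s = projOm (y s + t • gOp A B p c r (y s)))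
    (hiter : ∀ s : ℕ, y (s + 1) = projOm (y s + t • gOp A B p c r (yh s))) :
    ∀ s : ℕ, nrmT (y (s + 1) - ys) ≤ nrmT (y s - ys) := by
  have hminty := minty_of_monotone_of_stampacchia (b := ipTForm n m) hmono hys hVI
  exact stmt14_general (isPosSemidef_ipTForm n m) (isProjectionOnto_projOm n m) hlip hys hminty
    ht0.le (mul_le_one_of_lt_inv_sqrt_two_mul ht0 ht1) hy0 hyh hiter
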